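/- Let p be a prime and let m, n be positive integers with m ≤ n and p^m ≠ 2. Let χ be a Dirichlet character of conductor p^n, and let N be the smallest positive integer satisfying m(N+1) - ⌊log_p N⌋ ≥ n. Then there exists a polynomial f with integer coefficients, with zero constant term and degree at most N, such that for every integer x, χ(1 + p^m x) = e(f(x)/p^{n-m}). -/

import Mathlib

/-- `e(θ) = exp(2πiθ)`. -/
noncomputable def e (θ : ℝ) : ℂ := Complex.exp (2 * Real.pi * Complex.I * θ)

/-!
Take `r = n - m` and let `P(x) = ((1 + p^m x)^(p^r) - 1) / p^(r+m)`, a `p`-adic approximation of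
`p^(-m) log(1 + p^m x)`. Since taking `p^r`-th powers is multiplicative, `P` satisfies
`P(x + y + p^m x y) = P(x) + P(y) + p^(r+m) P(x) P(y)`, and since its coefficient of `X` is `1` and
the higher ones are divisible by `p` (here `p^m ≠ 2` enters), it permutes the residue classes modulo
`p^(n-m)`. So `x ↦ P(x)` identifies the group of residues `1 + p^m x` modulo `p^n` with the additive
group of `ℤ/p^(n-m)`, whose characters are the functions `a ↦ e(b a / p^(n-m))`. It remains to
replace `P` by a polynomial of degree at most `N` taking the same values modulo `p^(n-m)`: the
coefficient of `X^k` has valuation at least `m(k - 1) - v_p(k)`, which is at least `n - m` for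
`k ≥ N + 2`. For `k = N + 1` it may fall short by one when `k` is a power of `p`, but then
`x^k ≡ x` modulo `p` makes it possible to replace `X^(N+1)` by `X`.
-/

open Polynomial Finset

theorem log_add_two_le (b k : ℕ) : Nat.log b (k + 2) ≤ Nat.log b k + 1 := by
  rcases Nat.lt_or_ge 1 b with hb | hb
  · have hk : k < b ^ (Nat.log b k + 1) := Nat.lt_pow_succ_log_self hb k
    have hpow : b ^ (Nat.log b k + 1) * 2 ≤ b ^ (Nat.log b k + 1) * b := Nat.mul_le_mul_left _ hb
    refine Nat.le_of_lt_succ (Nat.log_lt_of_lt_pow (by omega) ?_)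
    have hone : 1 < b ^ (Nat.log b k + 1) := Nat.one_lt_pow (Nat.succ_ne_zero _) hb
    rw [Nat.succ_eq_add_one, pow_succ]
    omega
  · simp [Nat.log_of_left_le_one hb]

theorem add_log_le_mul_of_le {b m d N k : ℕ} (hm : 0 < m) (hN : d + Nat.log b N ≤ m * N)
    (hk : N ≤ k) : d + Nat.log b k ≤ m * k := by
  induction k, hk using Nat.le_induction with
  | base => exact hN
  | succ k _ ih =>
    have hlog : Nat.log b (k + 1) ≤ Nat.log b k + 1 :=
      (Nat.log_mono_right (Nat.le_succ _)).trans (log_add_two_le b k)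
    rw [mul_add_one]
    omega

theorem factorization_le_log {p k : ℕ} (hp : p.Prime) (hk : k ≠ 0) :
    k.factorization p ≤ Nat.log p k :=
  Nat.le_log_of_pow_le hp.one_lt (Nat.ordProj_le p hk)

theorem pow_add_dvd_choose_mul_pow {p r i j k : ℕ} (hp : p.Prime) (hk : k ≠ 0)
    (h : j + k.factorization p ≤ i) : p ^ (r + j) ∣ (p ^ r).choose k * p ^ i := by
  rcases Nat.lt_or_ge (p ^ r) k with hkr | hkr
  · simp [Nat.choose_eq_zero_of_lt hkr]
  · have hval := Nat.factorization_choose_prime_pow_add_factorization hp hkr hk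
    calc p ^ (r + j) ∣ p ^ (((p ^ r).choose k).factorization p + i) := pow_dvd_pow p (by omega)
      _ = p ^ ((p ^ r).choose k).factorization p * p ^ i := pow_add ..
      _ ∣ (p ^ r).choose k * p ^ i := mul_dvd_mul_right (Nat.ordProj_dvd _ p) _

theorem prime_dvd_pow_prime_pow_sub_self {p : ℕ} (hp : p.Prime) (v : ℕ) (x : ℤ) :
    (p : ℤ) ∣ x ^ p ^ v - x := by
  have := Fact.mk hp
  simp [← ZMod.intCast_zmod_eq_zero_iff_dvd, ZMod.pow_card_pow]

section Polynomial

variable {R : Type*} [CommRing R]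

theorem exists_eval_sub_eval_eq_mul {P : R[X]} {a : R} (h1 : P.coeff 1 = 1)
    (h2 : ∀ k, 2 ≤ k → a ∣ P.coeff k) (x y : R) :
    ∃ z, P.eval x - P.eval y = (x - y) * (1 + a * z) := by
  obtain ⟨Q, hQ⟩ : C a ∣ P - X - C (P.coeff 0) := by
    refine (C_dvd_iff_dvd_coeff _ _).2 fun k => ?_
    match k with
    | 0 => simp
    | 1 => simp [h1]
    | k + 2 => simpa [coeff_X, coeff_C] using h2 (k + 2) (by omega)
  obtain ⟨z, hz⟩ := sub_dvd_eval_sub x y Q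
  refine ⟨z, ?_⟩
  have heval : ∀ t, P.eval t = t + P.coeff 0 + a * Q.eval t := fun t => by
    have := congrArg (eval t) hQ
    simp only [eval_sub, eval_X, eval_C, eval_mul] at this
    linear_combination this
  rw [heval, heval]
  linear_combination a * hz

theorem exists_natDegree_le_dvd_eval_sub {P : R[X]} {q : R} {N : ℕ} (hN : 0 < N)
    (hlarge : ∀ k, N + 2 ≤ k → q ∣ P.coeff k)
    (hnext : ∀ x, q ∣ P.coeff (N + 1) * (x ^ (N + 1) - x)) :
    ∃ f : R[X], f.coeff 0 = P.coeff 0 ∧ f.natDegree ≤ N ∧ ∀ x, q ∣ P.eval x - f.eval x := by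
  refine ⟨∑ k ∈ range (N + 1), monomial k (P.coeff k) + C (P.coeff (N + 1)) * X, ?_, ?_, ?_⟩
  · simp [coeff_monomial]
  · refine natDegree_add_le_of_degree_le (natDegree_sum_le_of_forall_le _ _ fun k hk => ?_)
      ((natDegree_C_mul_le _ _).trans (natDegree_X_le.trans hN))
    exact (natDegree_monomial_le _).trans (Nat.le_of_lt_succ (mem_range.1 hk))
  · intro x
    have htail : q ∣ ∑ k ∈ range (P.natDegree + 1),
        P.coeff (N + 2 + k) * x ^ (N + 2 + k) :=
      dvd_sum fun k _ => (hlarge _ (by omega)).mul_right _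
    have hP : P.eval x = ∑ k ∈ range (N + 1), P.coeff k * x ^ k
        + P.coeff (N + 1) * x ^ (N + 1)
        + ∑ k ∈ range (P.natDegree + 1), P.coeff (N + 2 + k) * x ^ (N + 2 + k) := by
      rw [eval_eq_sum_range' (n := N + 2 + (P.natDegree + 1)) (by omega), sum_range_add,
        sum_range_succ]
    convert dvd_add (hnext x) htail using 1
    simp only [hP, eval_add, eval_finsetSum, eval_monomial, eval_mul, eval_C, eval_X]
    ring

end Polynomial

/-- The polynomial `((1 + p^m X)^(p^r) - 1) / p^(r+m)`, which tends `p`-adically to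
`p^(-m) log(1 + p^m X)` as `r → ∞`. For prime `p` and `0 < m` the natural division defining its
coefficients is exact when `k ≠ 0`; when `k = 0` it gives `1 / p^(r+m) = 0`, which accounts for the
subtraction of `1`. -/
noncomputable def powLog (p m r : ℕ) : ℤ[X] :=
  ∑ k ∈ range (p ^ r + 1), monomial k (((p ^ r).choose k * p ^ (m * k) / p ^ (r + m) : ℕ) : ℤ)

namespace powLog

variable {p m r d N : ℕ}

theorem coeff_eq (p m r k : ℕ) : (powLog p m r).coeff k =
    (((p ^ r).choose k * p ^ (m * k) / p ^ (r + m) : ℕ) : ℤ) := by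
  simp only [powLog, finsetSum_coeff, coeff_monomial, sum_ite_eq', mem_range]
  split_ifs with hk
  · rfl
  · simp [Nat.choose_eq_zero_of_lt (show p ^ r < k by omega)]

theorem coeff_zero (hp : p.Prime) (hm : 0 < m) : (powLog p m r).coeff 0 = 0 := by
  have : 1 < p ^ (r + m) := Nat.one_lt_pow (by omega) hp.one_lt
  simp [coeff_eq, Nat.div_eq_of_lt this]

theorem coeff_one (hp : p.Prime) : (powLog p m r).coeff 1 = 1 := by
  simp [coeff_eq, ← pow_add, Nat.div_self (pow_pos hp.pos (r + m))]

theorem pow_dvd_coeff (hp : p.Prime) {j k : ℕ} (hk : k ≠ 0)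
    (h : m + j + k.factorization p ≤ m * k) : (p : ℤ) ^ j ∣ (powLog p m r).coeff k := by
  rw [coeff_eq]
  refine mod_cast Nat.dvd_div_of_mul_dvd ?_
  rw [← pow_add, add_assoc]
  exact pow_add_dvd_choose_mul_pow hp hk h

theorem pow_mul_coeff (hp : p.Prime) (hm : 0 < m) {k : ℕ} (hk : k ≠ 0) :
    (p : ℤ) ^ (r + m) * (powLog p m r).coeff k = (p ^ r).choose k * (p : ℤ) ^ (m * k) := by
  have hle : m + k.factorization p ≤ m * k :=
    (add_le_add_right (factorization_le_log hp hk) m).trans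
      (add_log_le_mul_of_le hm (by simp) (Nat.one_le_iff_ne_zero.2 hk))
  rw [coeff_eq]
  exact mod_cast Nat.mul_div_cancel' (pow_add_dvd_choose_mul_pow hp hk hle)

theorem prime_dvd_coeff (hp : p.Prime) (hm : 0 < m) (hpm : p ^ m ≠ 2) {k : ℕ} (hk : 2 ≤ k) :
    (p : ℤ) ∣ (powLog p m r).coeff k := by
  have hk0 : k ≠ 0 := by omega
  have htwo : m + 1 + Nat.log p 2 ≤ m * 2 := by
    rcases hp.two_le.eq_or_lt with rfl | hp2
    · have : m ≠ 1 := by rintro rfl; exact hpm rfl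
      have : Nat.log 2 2 = 1 := Nat.log_pow Nat.one_lt_two 1
      omega
    · rw [Nat.log_of_lt hp2]
      omega
  have hle : m + 1 + k.factorization p ≤ m * k :=
    (add_le_add_right (factorization_le_log hp hk0) _).trans (add_log_le_mul_of_le hm htwo hk)
  simpa using pow_dvd_coeff (r := r) hp hk0 hle

theorem pow_dvd_coeff_of_add_two_le (hp : p.Prime) (hm : 0 < m) (hN : d + Nat.log p N ≤ m * N)
    {k : ℕ} (hk : N + 2 ≤ k) : (p : ℤ) ^ d ∣ (powLog p m r).coeff k := by
  obtain ⟨j, rfl⟩ := Nat.exists_eq_add_of_le' (le_of_add_le_right hk)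
  have hj : d + Nat.log p j ≤ m * j := add_log_le_mul_of_le hm hN (by omega)
  have hval := factorization_le_log hp (show j + 2 ≠ 0 by omega)
  have hlog := log_add_two_le p j
  refine pow_dvd_coeff hp (show j + 2 ≠ 0 by omega) ?_
  rw [mul_add]
  omega

theorem pow_dvd_coeff_mul_pow_sub (hp : p.Prime) (hN : d + Nat.log p N ≤ m * N) (x : ℤ) :
    (p : ℤ) ^ d ∣ (powLog p m r).coeff (N + 1) * (x ^ (N + 1) - x) := by
  rcases d with _ | d
  · simp
  have hk : N + 1 ≠ 0 := N.succ_ne_zero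
  rcases (Nat.ordProj_le p hk).eq_or_lt with hpow | hlt
  · have hval : (N + 1).factorization p ≤ Nat.log p N + 1 :=
      (factorization_le_log hp hk).trans
        ((Nat.log_mono_right (Nat.le_succ _)).trans (log_add_two_le p N))
    have hcoeff : (p : ℤ) ^ d ∣ (powLog p m r).coeff (N + 1) :=
      pow_dvd_coeff hp hk (by rw [mul_add_one]; omega)
    have hfermat : (p : ℤ) ∣ x ^ (N + 1) - x := by
      conv_rhs => rw [← hpow]
      exact prime_dvd_pow_prime_pow_sub_self hp _ x
    rw [pow_succ]
    exact mul_dvd_mul hcoeff hfermat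
  · have hval : (N + 1).factorization p ≤ Nat.log p N :=
      Nat.le_log_of_pow_le hp.one_lt (Nat.le_of_lt_succ hlt)
    exact (pow_dvd_coeff hp hk (by rw [mul_add_one]; omega)).mul_right _

theorem one_add_mul_pow_eq (hp : p.Prime) (hm : 0 < m) (x : ℤ) :
    (1 + (p : ℤ) ^ m * x) ^ p ^ r = 1 + (p : ℤ) ^ (r + m) * (powLog p m r).eval x := by
  have heval : (powLog p m r).eval x =
      ∑ k ∈ range (p ^ r), (powLog p m r).coeff (k + 1) * x ^ (k + 1) := by
    conv_lhs => rw [powLog]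
    simp only [eval_finsetSum, eval_monomial, ← coeff_eq]
    rw [sum_range_succ', coeff_zero hp hm, zero_mul, add_zero]
  rw [heval, add_comm, add_pow, sum_range_succ', mul_sum, add_comm]
  congr 1
  · simp
  · refine sum_congr rfl fun k _ => ?_
    rw [← mul_assoc, pow_mul_coeff hp hm k.succ_ne_zero, Nat.succ_eq_add_one, pow_mul, mul_pow]
    ring

theorem eval_add_add_mul (hp : p.Prime) (hm : 0 < m) (x y : ℤ) :
    (powLog p m r).eval (x + y + (p : ℤ) ^ m * x * y) =
      (powLog p m r).eval x + (powLog p m r).eval y +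
        (p : ℤ) ^ (r + m) * ((powLog p m r).eval x * (powLog p m r).eval y) := by
  have hmul : (1 + (p : ℤ) ^ m * (x + y + (p : ℤ) ^ m * x * y)) ^ p ^ r =
      (1 + (p : ℤ) ^ m * x) ^ p ^ r * (1 + (p : ℤ) ^ m * y) ^ p ^ r := by
    rw [← mul_pow]
    ring
  simp only [one_add_mul_pow_eq hp hm] at hmul
  refine mul_left_cancel₀ (pow_ne_zero (r + m) (Int.natCast_ne_zero.2 hp.ne_zero)) ?_
  linear_combination hmul

theorem pow_dvd_eval_sub_eval_iff (hp : p.Prime) (hm : 0 < m) (hpm : p ^ m ≠ 2) {x y : ℤ} :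
    (p : ℤ) ^ d ∣ (powLog p m r).eval x - (powLog p m r).eval y ↔ (p : ℤ) ^ d ∣ x - y := by
  obtain ⟨z, hz⟩ := exists_eval_sub_eval_eq_mul (coeff_one hp)
    (fun _ hk => prime_dvd_coeff (r := r) hp hm hpm hk) x y
  have hcoprime : IsCoprime ((p : ℤ) ^ d) (1 + p * z) := IsCoprime.pow_left ⟨-z, 1, by ring⟩
  rw [hz]
  exact ⟨hcoprime.dvd_of_dvd_mul_right, fun h => h.mul_right _⟩

theorem intCast_eval_eq_iff (hp : p.Prime) (hm : 0 < m) (hpm : p ^ m ≠ 2) {x y : ℤ} :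
    (((powLog p m r).eval x : ℤ) : ZMod (p ^ d)) = ((powLog p m r).eval y : ℤ) ↔
      (x : ZMod (p ^ d)) = y := by
  simpa [ZMod.intCast_eq_intCast_iff_dvd_sub] using pow_dvd_eval_sub_eval_iff hp hm hpm

theorem exists_intCast_eval_eq (hp : p.Prime) (hm : 0 < m) (hpm : p ^ m ≠ 2)
    (a : ZMod (p ^ d)) : ∃ x : ℤ, (((powLog p m r).eval x : ℤ) : ZMod (p ^ d)) = a := by
  have : NeZero (p ^ d) := ⟨(pow_pos hp.pos d).ne'⟩
  let P := (powLog p m r).map (Int.castRingHom (ZMod (p ^ d)))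
  have hP : ∀ x : ℤ, P.eval (x : ZMod (p ^ d)) = ((powLog p m r).eval x : ℤ) := fun x => by
    simp [P, eval_intCast_map]
  have hinj : Function.Injective fun b => P.eval b := by
    intro b c hbc
    obtain ⟨x, rfl⟩ := ZMod.intCast_surjective b
    obtain ⟨y, rfl⟩ := ZMod.intCast_surjective c
    simpa only [hP, intCast_eval_eq_iff hp hm hpm] using hbc
  obtain ⟨b, hb⟩ := Finite.surjective_of_injective hinj a
  obtain ⟨x, rfl⟩ := ZMod.intCast_surjective b
  exact ⟨x, (hP x).symm.trans hb⟩

theorem exists_polynomial_natDegree_le (hp : p.Prime) (hm : 0 < m) (hN0 : 0 < N)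
    (hN : d + Nat.log p N ≤ m * N) :
    ∃ f : ℤ[X], f.coeff 0 = 0 ∧ f.natDegree ≤ N ∧
      ∀ x : ℤ, (((powLog p m r).eval x : ℤ) : ZMod (p ^ d)) = (f.eval x : ℤ) := by
  obtain ⟨f, hf0, hfN, hf⟩ := exists_natDegree_le_dvd_eval_sub hN0
    (fun _ => pow_dvd_coeff_of_add_two_le (r := r) hp hm hN) (pow_dvd_coeff_mul_pow_sub hp hN)
  refine ⟨f, hf0.trans (coeff_zero hp hm), hfN, fun x => ?_⟩
  rw [eq_comm, ZMod.intCast_eq_intCast_iff_dvd_sub]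
  exact mod_cast hf x

end powLog

theorem intCast_one_add_pow_mul_congr {p m d : ℕ} {x y : ℤ} (h : (x : ZMod (p ^ d)) = y) :
    ((1 + p ^ m * x : ℤ) : ZMod (p ^ (m + d))) = ((1 + p ^ m * y : ℤ) : ZMod (p ^ (m + d))) := by
  rw [ZMod.intCast_eq_intCast_iff_dvd_sub] at h ⊢
  push_cast at h ⊢
  rw [pow_add, add_sub_add_left_eq_sub, ← mul_sub]
  exact mul_dvd_mul_left _ h

theorem exists_addChar_powLog_eval {R : Type*} [CommMonoidWithZero R] {p m r d : ℕ}
    (hp : p.Prime) (hm : 0 < m) (hpm : p ^ m ≠ 2) (hr : d ≤ r + m)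
    (χ : DirichletCharacter R (p ^ (m + d))) :
    ∃ ψ : AddChar (ZMod (p ^ d)) R, ∀ x : ℤ,
      χ ((1 + p ^ m * x : ℤ) : ZMod (p ^ (m + d))) = ψ ((powLog p m r).eval x : ℤ) := by
  let P := powLog p m r
  have hfib : ∀ x y : ℤ, ((P.eval x : ℤ) : ZMod (p ^ d)) = (P.eval y : ℤ) →
      χ ((1 + p ^ m * x : ℤ) : ZMod (p ^ (m + d))) = χ ((1 + p ^ m * y : ℤ)) := fun x y h =>
    congrArg χ (intCast_one_add_pow_mul_congr ((powLog.intCast_eval_eq_iff hp hm hpm).1 h))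
  have hadd : ∀ x y : ℤ, ((P.eval (x + y + (p : ℤ) ^ m * x * y) : ℤ) : ZMod (p ^ d)) =
      (P.eval x : ℤ) + (P.eval y : ℤ) := fun x y => by
    have hzero : (p : ZMod (p ^ d)) ^ (r + m) = 0 :=
      pow_eq_zero_of_le hr (mod_cast ZMod.natCast_self (p ^ d))
    simp [P, powLog.eval_add_add_mul hp hm, hzero]
  have hzero : P.eval 0 = 0 := by
    rw [← coeff_zero_eq_eval_zero, powLog.coeff_zero hp hm]
  choose s hs using powLog.exists_intCast_eval_eq (r := r) (d := d) hp hm hpm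
  refine ⟨⟨fun a => χ ((1 + p ^ m * s a : ℤ)), ?_, fun a b => ?_⟩, fun x => hfib _ _ (hs _).symm⟩
  · rw [hfib (s 0) 0 (by simp [P, hs, hzero])]
    simp
  · rw [hfib (s (a + b)) (s a + s b + (p : ℤ) ^ m * s a * s b) (by simp [hadd, P, hs]), ← map_mul]
    push_cast
    ring_nf

theorem exists_forall_addChar_intCast_eq_e {q : ℕ} [NeZero q] (ψ : AddChar (ZMod q) ℂ) :
    ∃ b : ℤ, ∀ x : ℤ, ψ x = e ((b * x : ℤ) / q) := by
  obtain ⟨a, rfl⟩ := (AddChar.zmodAddEquiv (n := q)).surjective ψ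
  obtain ⟨b, rfl⟩ := ZMod.intCast_surjective a
  refine ⟨b, fun x => ?_⟩
  calc AddChar.zmodAddEquiv (b : ZMod q) (x : ZMod q)
    _ = AddChar.zmod q b x := rfl
    _ = e ((b * x : ℤ) / q) := by
      rw [AddChar.zmod_intCast, Circle.coe_exp, e]
      push_cast
      ring_nf

theorem postnikov_formula_general (p : ℕ) (hp : p.Prime) (m n : ℕ) (hm : 0 < m) (hmn : m ≤ n)
    (hpm : p ^ m ≠ 2) (χ : DirichletCharacter ℂ (p ^ n)) (N : ℕ) (hN : 0 < N)
    (hN1 : (n : ℤ) ≤ (m : ℤ) * (N + 1) - (Nat.log p N : ℤ)) :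
    ∃ f : Polynomial ℤ, f.coeff 0 = 0 ∧ f.natDegree ≤ N ∧
      ∀ x : ℤ, χ (((1 + p ^ m * x : ℤ) : ZMod (p ^ n))) =
        e (((f.eval x : ℤ) : ℝ) / (p : ℝ) ^ (n - m)) := by
  obtain ⟨d, rfl⟩ := Nat.exists_eq_add_of_le hmn
  have hdN : d + Nat.log p N ≤ m * N := by
    zify at hN1 ⊢
    linarith
  obtain ⟨f, hf0, hfN, hf⟩ := powLog.exists_polynomial_natDegree_le (r := d) hp hm hN hdN
  obtain ⟨ψ, hψ⟩ := exists_addChar_powLog_eval hp hm hpm (Nat.le_add_right d m) χ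
  have : NeZero (p ^ d) := ⟨(pow_pos hp.pos d).ne'⟩
  obtain ⟨b, hb⟩ := exists_forall_addChar_intCast_eq_e ψ
  refine ⟨C b * f, by simp [hf0], (natDegree_C_mul_le _ _).trans hfN, fun x => ?_⟩
  rw [hψ, hf, hb, eval_mul, eval_C, Nat.add_sub_cancel_left, Nat.cast_pow]

/-- Proposition A.4 (Postnikov character formula): if `p` is prime, `1 ≤ m ≤ n`,
`p^m ≠ 2`, `χ` is a Dirichlet character of conductor `p^n`, and `N` is the smallest
positive integer with `m(N+1) - ⌊log_p N⌋ ≥ n`, then there is `f ∈ ℤ[x]` with zero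
constant term and degree at most `N` such that `χ(1 + p^m x) = e(f(x)/p^{n-m})` for all
integers `x`. -/
theorem postnikov_formula (p : ℕ) (hp : p.Prime) (m n : ℕ) (hm : 0 < m) (hmn : m ≤ n)
    (hpm : p ^ m ≠ 2) (χ : DirichletCharacter ℂ (p ^ n)) (hχ : χ.IsPrimitive)
    (N : ℕ) (hN : 0 < N) (hN1 : (n : ℤ) ≤ (m : ℤ) * (N + 1) - (Nat.log p N : ℤ))
    (hNmin : ∀ N' : ℕ, 0 < N' → (n : ℤ) ≤ (m : ℤ) * (N' + 1) - (Nat.log p N' : ℤ) → N ≤ N') :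
    ∃ f : Polynomial ℤ, f.coeff 0 = 0 ∧ f.natDegree ≤ N ∧
      ∀ x : ℤ, χ (((1 + p ^ m * x : ℤ) : ZMod (p ^ n))) =
        e (((f.eval x : ℤ) : ℝ) / (p : ℝ) ^ (n - m)) :=
  postnikov_formula_general p hp m n hm hmn hpm χ N hN hN1
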